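/- arXiv:1609.03049 — 2 statements merged into one kernel-verified Lean document; each statement's English description precedes it below -/
import Mathlib

section
/- Let M be a 3-connected excluded minor of \overline{BL} having a U_{2,4}-minor. If r*(M) \le 4, then r(M) \le 9. -/
/-!
Let `Q = M / e`, where we may assume that `M` has at least four elements. A 3-connected matroid of
this size is cosimple, and so is its contraction `Q`, so any two elements of `Q` are separated by a
circuit. As `Q` is graphic or bicircular lift, it is represented by a graph `G`, and each element of
a circuit of `Q` lies in a cycle of `G` inside that circuit; hence any two edges of `G` are
separated by a cycle. Consequently every edge either has both ends of degree at least three or is a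
loop at an otherwise isolated vertex.

A base `B` of `Q` contains at most one cycle of `G`, so `|B|`, if it exceeds one, is at most the
number of vertices of degree at least three, which by the handshake identity is at most
`2|E(G)|/3`. Therefore `|E(Q)| ≤ 3 r*(Q)`, so `|E(M)| ≤ 3 r*(M) + 1`, that is,
`r(M) ≤ 2 r*(M) + 1`.
-/

open Set Matroid

universe u

namespace BLFormal

/-! ### Matroid preliminaries -/

/-- A circuit of a matroid: a minimal dependent set. -/
def Circuit {α : Type u} (M : Matroid α) (C : Set α) : Prop := Minimal M.Dep C

/-- Deletion of a set of elements from a matroid. -/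
def del {α : Type u} (M : Matroid α) (D : Set α) : Matroid α := M ↾ (M.E \ D)

/-- Contraction of a set of elements of a matroid, defined by duality. -/
def con {α : Type u} (M : Matroid α) (C : Set α) : Matroid α := (del M✶ C)✶

/-- `N` is a minor of `M` if it is obtained by a contraction followed by a deletion. -/
def IsMinor {α : Type u} (N M : Matroid α) : Prop := ∃ C D : Set α, N = del (con M C) D

/-- `N` is a proper (strict) minor of `M`. -/
def IsStrictMinor {α : Type u} (N M : Matroid α) : Prop := IsMinor N M ∧ N ≠ M

/-- The rank of a set `X` in the matroid `M`, as an extended natural number: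
the supremum of the cardinalities of the independent subsets of `X`. -/
noncomputable def eRk {α : Type u} (M : Matroid α) (X : Set α) : ℕ∞ :=
  ⨆ I : {I : Set α // M.Indep I ∧ I ⊆ X}, (I : Set α).encard

/-- The rank `r(M)` of a matroid, as an extended natural number. -/
noncomputable def eRank {α : Type u} (M : Matroid α) : ℕ∞ := eRk M M.E

/-- A loop of a matroid. -/
def MLoop {α : Type u} (M : Matroid α) (e : α) : Prop := M.Dep {e}

/-- A coloop of a matroid: a loop of the dual. -/
def MColoop {α : Type u} (M : Matroid α) (e : α) : Prop := MLoop M✶ e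

/-- A `k`-separation of a matroid: a partition `(X, Y)` of the ground set with
`|X|, |Y| ≥ k` and `r(X) + r(Y) - r(M) ≤ k - 1`. -/
def IsKSep {α : Type u} (M : Matroid α) (k : ℕ) (X Y : Set α) : Prop :=
  X ∪ Y = M.E ∧ Disjoint X Y ∧ (k : ℕ∞) ≤ X.encard ∧ (k : ℕ∞) ≤ Y.encard ∧
    eRk M X + eRk M Y ≤ eRank M + ((k - 1 : ℕ) : ℕ∞)

/-- A matroid is connected if it has no 1-separation. -/
def MConnected {α : Type u} (M : Matroid α) : Prop := ¬ ∃ X Y, IsKSep M 1 X Y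

/-- A matroid is 3-connected if it is connected and has no 2-separation. -/
def ThreeConnected {α : Type u} (M : Matroid α) : Prop :=
  MConnected M ∧ ¬ ∃ X Y, IsKSep M 2 X Y

/-- Two elements of a matroid form a series pair if no circuit contains exactly one
of them, and some circuit contains both. -/
def SeriesPair {α : Type u} (M : Matroid α) (e f : α) : Prop :=
  (∀ C, Circuit M C → (e ∈ C ↔ f ∈ C)) ∧ ∃ C, Circuit M C ∧ e ∈ C ∧ f ∈ C

/-- A series class: a maximal set in which every two elements form a series pair. -/
def IsSeriesClass {α : Type u} (M : Matroid α) (S : Set α) : Prop :=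
  Maximal (fun T => T.Nonempty ∧ ∀ e ∈ T, ∀ f ∈ T, SeriesPair M e f) S

/-- `N` is a cosimplification `co(M)` of `M`: it is obtained from `M` by contracting
all coloops and, in each series class, all but one element. -/
def IsCosimplification {α : Type u} (M N : Matroid α) : Prop :=
  ∃ D ⊆ M.E, N = con M D ∧ (∀ e, MColoop M e → e ∈ D) ∧
    ∀ S, IsSeriesClass M S → ∃ x ∈ S, S \ D = {x}

/-- `M` is isomorphic to the uniform matroid `U_{k, n}`: the ground set has `n` elements
and the circuits are precisely the `(k+1)`-element subsets of the ground set. -/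
def IsUnif {α : Type u} (k n : ℕ) (M : Matroid α) : Prop :=
  M.E.encard = n ∧ ∀ C, Circuit M C ↔ C ⊆ M.E ∧ C.encard = k + 1

/-- `M` has a `U_{2,4}`-minor. -/
def HasU24Minor {α : Type u} (M : Matroid α) : Prop := ∃ N, IsMinor N M ∧ IsUnif 2 4 N

/-- `M` is isomorphic to the direct sum `U_{2,4} ⊕ U_{0,1}` of `U_{2,4}` and a loop:
its ground set consists of a 4-element set `X` together with one further element `l`,
and its circuits are `{l}` and the 3-element subsets of `X`. -/
def IsU24PlusLoop {α : Type u} (M : Matroid α) : Prop :=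
  ∃ (X : Set α) (l : α), l ∉ X ∧ M.E = insert l X ∧ X.encard = 4 ∧
    ∀ C, Circuit M C ↔ (C = {l} ∨ (C ⊆ X ∧ C.encard = 3))

/-- `M` is isomorphic to the Fano matroid `F₇`: the rank-3 matroid represented over
`GF(2)` by the seven nonzero vectors of `GF(2)³`. -/
def IsFano {α : Type u} (M : Matroid α) : Prop :=
  ∃ v : α → (Fin 3 → ZMod 2),
    Set.BijOn v M.E {w | w ≠ 0} ∧
    ∀ I ⊆ M.E, (M.Indep I ↔ LinearIndependent (ZMod 2) (fun x : I => v x))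

/-! ### Graphs (with loops and parallel edges allowed) -/

/-- A graph on vertex type `V`, with edge set `E` living in the ambient edge type `α`;
each edge is sent to the unordered pair of its end-vertices. -/
structure Graph (V : Type u) (α : Type u) where
  E : Set α
  inc : α → Sym2 V

namespace Graph

variable {V : Type u} {α : Type u}

/-- The vertices incident with an edge set `C`. -/
def vertsOf (G : Graph V α) (C : Set α) : Set V := {v | ∃ e ∈ C, v ∈ G.inc e}

/-- The vertex set of a graph (we consider graphs without isolated vertices). -/
def verts (G : Graph V α) : Set V := G.vertsOf G.E

/-- Deletion of a set of edges from a graph. -/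
def delete (G : Graph V α) (D : Set α) : Graph V α := ⟨G.E \ D, G.inc⟩

/-- The degree of a vertex `v` in the edge set `C`, with loops counting twice. -/
noncomputable def deg (G : Graph V α) (C : Set α) (v : V) : ℕ :=
  {e ∈ C | v ∈ G.inc e}.ncard + {e ∈ C | G.inc e = Sym2.diag v}.ncard

/-- Two vertices are adjacent via an edge of `C`. -/
def AdjOn (G : Graph V α) (C : Set α) (u v : V) : Prop := ∃ e ∈ C, G.inc e = s(u, v)

/-- The subgraph with edge set `C` is connected. -/
def ConnectedOn (G : Graph V α) (C : Set α) : Prop :=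
  ∀ u ∈ G.vertsOf C, ∀ v ∈ G.vertsOf C, Relation.ReflTransGen (G.AdjOn C) u v

/-- `C` is a cycle of `G` : the edge set of a connected 2-regular subgraph. -/
def IsCycle (G : Graph V α) (C : Set α) : Prop :=
  C ⊆ G.E ∧ C.Finite ∧ C.Nonempty ∧ (∀ v ∈ G.vertsOf C, G.deg C v = 2) ∧ G.ConnectedOn C

/-- A graph is 2-edge-connected if each of its edges lies in a cycle. -/
def TwoEdgeConnected (G : Graph V α) : Prop := ∀ e ∈ G.E, ∃ C, G.IsCycle C ∧ e ∈ C

/-- A graph is connected if it has at least one vertex and any two of its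
vertices are joined by a path. -/
def Connected (G : Graph V α) : Prop := G.verts.Nonempty ∧ G.ConnectedOn G.E

/-- Delete a vertex from a graph (removing all edges incident with it). -/
def delVert (G : Graph V α) (v : V) : Graph V α := ⟨{e ∈ G.E | v ∉ G.inc e}, G.inc⟩

/-- A graph is 2-connected if it is connected and stays connected after the
deletion of any vertex. -/
def TwoConnected (G : Graph V α) : Prop :=
  G.Connected ∧ ∀ v ∈ G.verts, (G.delVert v).Connected

/-- `X` contains at least two (distinct) cycles of `G`. -/
def HasTwoCycles (G : Graph V α) (X : Set α) : Prop :=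
  ∃ C₁ C₂, G.IsCycle C₁ ∧ G.IsCycle C₂ ∧ C₁ ≠ C₂ ∧ C₁ ⊆ X ∧ C₂ ⊆ X

/-- The circuits of the bicircular lift matroid of `G`: edge sets containing at
least two cycles and minimal with this property. -/
def LiftCircuit (G : Graph V α) (X : Set α) : Prop :=
  Minimal (fun Y => Y ⊆ G.E ∧ G.HasTwoCycles Y) X

/-- Two edges of a graph form a series pair if no cycle contains exactly one of
them, and some cycle contains both. -/
def SeriesPair (G : Graph V α) (e f : α) : Prop :=
  (∀ C, G.IsCycle C → (e ∈ C ↔ f ∈ C)) ∧ ∃ C, G.IsCycle C ∧ e ∈ C ∧ f ∈ C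

end Graph

/-- `N` is the bicircular lift matroid `L(G)` of `G` : its ground set is `E(G)`
and its circuits are the lift circuits of `G`. -/
def IsLiftRep {V α : Type u} (G : Graph V α) (N : Matroid α) : Prop :=
  N.E = G.E ∧ ∀ C, Circuit N C ↔ G.LiftCircuit C

/-- `N` is the cycle matroid `M(G)` of `G` : its ground set is `E(G)` and its
circuits are the cycles of `G`. -/
def IsGraphicRep {V α : Type u} (G : Graph V α) (N : Matroid α) : Prop :=
  N.E = G.E ∧ ∀ C, Circuit N C ↔ G.IsCycle C

/-- A matroid is bicircular lift if it is (isomorphic to) `L(G)` for some graph `G`. -/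
def IsBicircularLift {α : Type u} (N : Matroid α) : Prop :=
  ∃ (V : Type u) (G : Graph V α), IsLiftRep G N

/-- A matroid is graphic if it is (isomorphic to) the cycle matroid of some graph. -/
def IsGraphic {α : Type u} (N : Matroid α) : Prop :=
  ∃ (V : Type u) (G : Graph V α), IsGraphicRep G N

/-- The class `BL-bar` of matroids that are graphic or bicircular lift. -/
def InBL {α : Type u} (N : Matroid α) : Prop := IsGraphic N ∨ IsBicircularLift N

/-- `M` is an excluded minor for the class `BL-bar`. -/
def ExcludedMinorBL {α : Type u} (M : Matroid α) : Prop :=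
  ¬ InBL M ∧ ∀ N, IsStrictMinor N M → InBL N

/-! ### Special graphs and subdivisions -/

/-- `G` is (a copy of) the complete graph `K₄`. -/
def IsK4 {V α : Type u} (G : Graph V α) : Prop :=
  ∃ v : Fin 4 → V, Function.Injective v ∧
    ∃ ed : {p : Sym2 (Fin 4) // ¬ p.IsDiag} → α, Function.Injective ed ∧
      G.E = Set.range ed ∧ ∀ p, G.inc (ed p) = Sym2.map v p.1

/-- `G` is (a copy of) the complete graph `K₅`. -/
def IsK5 {V α : Type u} (G : Graph V α) : Prop :=
  ∃ v : Fin 5 → V, Function.Injective v ∧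
    ∃ ed : {p : Sym2 (Fin 5) // ¬ p.IsDiag} → α, Function.Injective ed ∧
      G.E = Set.range ed ∧ ∀ p, G.inc (ed p) = Sym2.map v p.1

/-- `G` is (a copy of) the complete bipartite graph `K₃,₃`. -/
def IsK33 {V α : Type u} (G : Graph V α) : Prop :=
  ∃ a b : Fin 3 → V, Function.Injective a ∧ Function.Injective b ∧
    Set.range a ∩ Set.range b = ∅ ∧
    ∃ ed : Fin 3 × Fin 3 → α, Function.Injective ed ∧
      G.E = Set.range ed ∧ ∀ p, G.inc (ed p) = s(a p.1, b p.2)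

/-- `G` is (a copy of) the graph `K₂ⁿ` with two vertices joined by `n` parallel edges. -/
def IsK2n {V α : Type u} (n : ℕ) (G : Graph V α) : Prop :=
  ∃ u v : V, u ≠ v ∧ ∃ ed : Fin n → α, Function.Injective ed ∧
    G.E = Set.range ed ∧ ∀ i, G.inc (ed i) = s(u, v)

/-- `H` is obtained from `G` by subdividing a single edge. -/
def ElemSub {V α : Type u} (G H : Graph V α) : Prop :=
  ∃ e ∈ G.E, ∃ (f g : α) (u v w : V),
    G.inc e = s(u, v) ∧ w ∉ G.verts ∧ f ≠ g ∧
    f ∉ G.E \ {e} ∧ g ∉ G.E \ {e} ∧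
    H.E = (G.E \ {e}) ∪ {f, g} ∧
    H.inc f = s(u, w) ∧ H.inc g = s(w, v) ∧
    ∀ x ∈ G.E \ {e}, H.inc x = G.inc x

/-- `H` is a subdivision of `G` : it is obtained from `G` by repeatedly
subdividing edges. -/
def IsSubdivision {V α : Type u} (G H : Graph V α) : Prop :=
  Relation.ReflTransGen ElemSub G H

/-! ### 2-sums and simplification -/

/-- `N` is the 2-sum `N₁ ⊕₂ᵉ N₂` of `N₁` and `N₂` along `e`. -/
def Is2Sum {α : Type u} (N N₁ N₂ : Matroid α) (e : α) : Prop :=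
  N₁.E ∩ N₂.E = {e} ∧
  ¬ MLoop N₁ e ∧ ¬ MColoop N₁ e ∧ ¬ MLoop N₂ e ∧ ¬ MColoop N₂ e ∧
  N.E = (N₁.E ∪ N₂.E) \ {e} ∧
  ∀ C, Circuit N C ↔
    ((Circuit N₁ C ∧ e ∉ C) ∨ (Circuit N₂ C ∧ e ∉ C) ∨
      ∃ C₁ C₂, Circuit N₁ C₁ ∧ Circuit N₂ C₂ ∧ e ∈ C₁ ∧ e ∈ C₂ ∧
        C = (C₁ \ {e}) ∪ (C₂ \ {e}))

/-- `H` is a simplification `si(G)` of `G` : it is obtained from `G` by deleting all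
loops and all but one edge of each parallel class. -/
def IsSimplification {V α : Type u} (G H : Graph V α) : Prop :=
  H.inc = G.inc ∧ H.E ⊆ G.E ∧ (∀ e ∈ H.E, ¬ (G.inc e).IsDiag) ∧
    ∀ e ∈ G.E, ¬ (G.inc e).IsDiag → ∃! f, f ∈ H.E ∧ G.inc f = G.inc e

/-- `H` is 2-connected, or is obtained from a 2-connected graph and a single edge `K₂`
by identifying one end-vertex of the edge with a vertex of the 2-connected graph. -/
def TwoConnOrPendant {V α : Type u} (H : Graph V α) : Prop :=
  H.TwoConnected ∨
    ∃ (e : α) (u w : V), e ∈ H.E ∧ H.inc e = s(u, w) ∧ u ≠ w ∧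
      (H.delete {e}).TwoConnected ∧ u ∈ (H.delete {e}).verts ∧ w ∉ (H.delete {e}).verts

theorem exists_minimal_subset_of_finite {α : Type*} {P : Set α → Prop} {X : Set α}
    (hX : X.Finite) (h : P X) : ∃ Y ⊆ X, Minimal P Y := by
  obtain ⟨Y, hYX, hY⟩ := (hX.finite_subsets.subset (t := {Y | Y ⊆ X ∧ P Y})
    fun _ hY ↦ hY.1).exists_le_minimal ⟨subset_rfl, h⟩
  exact ⟨Y, hYX, hY.prop.2, fun Z hZ hZY ↦ hY.le_of_le ⟨hZY.trans hYX, hZ⟩ hZY⟩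

namespace Graph
variable {V α : Type u} {G : Graph V α} {B X Y : Set α} {e f : α} {u v : V}

theorem vertsOf_mono (h : X ⊆ Y) : G.vertsOf X ⊆ G.vertsOf Y :=
  fun _ ⟨e, he, hv⟩ ↦ ⟨e, h he, hv⟩

theorem vertsOf_nonempty (h : X.Nonempty) : (G.vertsOf X).Nonempty :=
  let ⟨e, he⟩ := h
  ⟨_, e, he, Sym2.out_fst_mem _⟩

theorem finite_vertsOf (hX : X.Finite) : (G.vertsOf X).Finite := by
  classical
  have h : G.vertsOf X = ⋃ e ∈ X, ((G.inc e).toFinset : Set V) := by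
    ext v
    simp [vertsOf]
  exact h ▸ hX.biUnion fun e _ ↦ Finset.finite_toSet _

theorem deg_lt_deg (hX : X.Finite) (hYX : Y ⊆ X) (hf : f ∈ X) (hfY : f ∉ Y)
    (hv : v ∈ G.inc f) : G.deg Y v < G.deg X v := by
  refine add_lt_add_of_lt_of_le (ncard_lt_ncard ?_ (hX.subset fun _ he ↦ he.1))
    (ncard_le_ncard (fun _ he ↦ ⟨hYX he.1, he.2⟩) (hX.subset fun _ he ↦ he.1))
  exact ⟨fun _ he ↦ ⟨hYX he.1, he.2⟩, fun h ↦ hfY (h ⟨hf, hv⟩).1⟩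

theorem exists_pendant_of_deg_lt_two (hX : X.Finite) (hv : v ∈ G.vertsOf X)
    (hd : G.deg X v < 2) :
    ∃ e ∈ X, v ∈ G.inc e ∧ G.inc e ≠ Sym2.diag v ∧ ∀ f ∈ X, v ∈ G.inc f → f = e := by
  obtain ⟨e, he, hve⟩ := hv
  have hfin : {f ∈ X | v ∈ G.inc f}.Finite := hX.subset fun _ hf ↦ hf.1
  have hpos : 0 < {f ∈ X | v ∈ G.inc f}.ncard := (ncard_pos hfin).2 ⟨e, he, hve⟩
  have hloops : {f ∈ X | G.inc f = Sym2.diag v}.ncard = 0 := by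
    unfold deg at hd; omega
  have hone : {f ∈ X | v ∈ G.inc f}.ncard ≤ 1 := by
    unfold deg at hd; omega
  rw [ncard_eq_zero (hX.subset fun _ hf ↦ hf.1)] at hloops
  exact ⟨e, he, hve, fun h ↦ (hloops ▸ ⟨he, h⟩ : e ∈ (∅ : Set α)),
    fun f hf hvf ↦ (ncard_le_one hfin).1 hone f ⟨hf, hvf⟩ e ⟨he, hve⟩⟩

theorem card_filter_mem_add_card_filter_eq_diag [DecidableEq V] {z : Sym2 V} {S : Finset V}
    (hz : ∀ v ∈ z, v ∈ S) : (S.filter (· ∈ z)).card + (S.filter (z = Sym2.diag ·)).card = 2 := by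
  have hmem : S.filter (· ∈ z) = z.toFinset := by
    ext v
    simpa using hz v
  rw [hmem]
  by_cases hdiag : z.IsDiag
  · obtain ⟨a, rfl⟩ : ∃ a, Sym2.diag a = z := ⟨_, Sym2.diag_diagElem hdiag⟩
    have hloop : S.filter (Sym2.diag a = Sym2.diag ·) = {a} := by
      ext v
      simp only [Sym2.diag_injective.eq_iff, Finset.mem_filter, Finset.mem_singleton]
      exact ⟨fun h ↦ h.2.symm, by rintro rfl; exact ⟨hz v (Sym2.mem_mk_left v v), rfl⟩⟩
    rw [hloop, Sym2.card_toFinset_of_isDiag _ hdiag, Finset.card_singleton]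
  · have hloop : S.filter (z = Sym2.diag ·) = ∅ :=
      Finset.filter_eq_empty_iff.2 fun v _ h ↦ hdiag (h ▸ Sym2.diag_isDiag v)
    rw [hloop, Sym2.card_toFinset_of_not_isDiag _ hdiag, Finset.card_empty]

theorem sum_deg (hX : X.Finite) :
    ∑ v ∈ (finite_vertsOf (G := G) hX).toFinset, G.deg X v = 2 * X.ncard := by
  classical
  lift X to Finset α using hX
  set S := (finite_vertsOf (G := G) X.finite_toSet).toFinset
  have sum_ncard (p : V → α → Prop) [∀ v e, Decidable (p v e)] :
      ∑ v ∈ S, {e ∈ (X : Set α) | p v e}.ncard = ∑ e ∈ X, (S.filter (p · e)).card := by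
    refine (Finset.sum_congr rfl fun v _ ↦ ?_).trans
      (Finset.sum_card_bipartiteAbove_eq_sum_card_bipartiteBelow p)
    rw [← ncard_coe_finset, Finset.coe_bipartiteAbove]
    rfl
  calc ∑ v ∈ S, G.deg X v
      = ∑ e ∈ X, ((S.filter (· ∈ G.inc e)).card + (S.filter (G.inc e = Sym2.diag ·)).card) := by
        simp only [deg, Finset.sum_add_distrib, sum_ncard]
    _ = ∑ e ∈ X, 2 := Finset.sum_congr rfl fun e he ↦
        card_filter_mem_add_card_filter_eq_diag fun v hv ↦
          (finite_vertsOf X.finite_toSet).mem_toFinset.2 ⟨e, he, hv⟩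
    _ = 2 * (X : Set α).ncard := by
        rw [Finset.sum_const, smul_eq_mul, mul_comm, ncard_coe_finset]

theorem mul_ncard_setOf_le_deg_le (hX : X.Finite) (k : ℕ) :
    k * {v ∈ G.vertsOf X | k ≤ G.deg X v}.ncard ≤ 2 * X.ncard := by
  classical
  set S := (finite_vertsOf (G := G) hX).toFinset with hS
  have hcoe : {v ∈ G.vertsOf X | k ≤ G.deg X v} = (S.filter (k ≤ G.deg X ·) : Finset V) := by
    ext v
    simp [hS]
  calc k * {v ∈ G.vertsOf X | k ≤ G.deg X v}.ncard
      = (S.filter (k ≤ G.deg X ·)).card • k := by rw [hcoe, ncard_coe_finset, smul_eq_mul, mul_comm]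
    _ ≤ ∑ v ∈ S with k ≤ G.deg X v, G.deg X v :=
        Finset.card_nsmul_le_sum _ _ _ fun v hv ↦ (Finset.mem_filter.1 hv).2
    _ ≤ ∑ v ∈ S, G.deg X v := Finset.sum_le_sum_of_subset (Finset.filter_subset _ _)
    _ = 2 * X.ncard := sum_deg hX

/-- An edge set is *edge-rich* if it is finite and nonempty, and has at least as many edges as
incident vertices. This is how cycles are produced by counting: a minimal edge-rich set of edges of
`G` is a cycle. -/
def EdgeRich (G : Graph V α) (X : Set α) : Prop :=
  X.Finite ∧ X.Nonempty ∧ (G.vertsOf X).ncard ≤ X.ncard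

theorem ncard_lt_ncard_vertsOf_of_ssubset (hX : Minimal G.EdgeRich X) (hYX : Y ⊂ X)
    (hY : Y.Nonempty) : Y.ncard < (G.vertsOf Y).ncard := by
  by_contra! h
  exact hYX.not_subset (hX.le_of_le ⟨hX.prop.1.subset hYX.subset, hY, h⟩ hYX.subset)

theorem two_le_deg_of_minimal_edgeRich (hX : Minimal G.EdgeRich X) (hv : v ∈ G.vertsOf X) :
    2 ≤ G.deg X v := by
  obtain ⟨hfin, -, hrich⟩ := hX.prop
  by_contra! hd
  obtain ⟨e, he, hve, hloop, huniq⟩ := exists_pendant_of_deg_lt_two hfin hv hd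
  have hV := finite_vertsOf (G := G) hfin
  have hVe : G.vertsOf (X \ {e}) ⊆ G.vertsOf X \ {v} := by
    rintro w ⟨f, hf, hw⟩
    exact ⟨⟨f, hf.1, hw⟩, by rintro rfl; exact hf.2 (huniq f hf.1 hw)⟩
  have hVcard := ncard_le_ncard hVe (hV.subset sdiff_subset)
  have hXcard := ncard_sdiff_singleton_add_one he hfin
  rw [ncard_sdiff_singleton_of_mem hv] at hVcard
  have hpos : 0 < (X \ {e}).ncard := by
    have hother : Sym2.Mem.other hve ≠ v := fun h ↦ hloop (by
      rw [← Sym2.other_spec hve, h]; rfl)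
    have hlt : 1 < (G.vertsOf X).ncard := (one_lt_ncard hV).2
      ⟨_, ⟨e, he, Sym2.other_mem hve⟩, v, hv, hother⟩
    omega
  have hlt := ncard_lt_ncard_vertsOf_of_ssubset hX (sdiff_singleton_ssubset.2 he)
    (nonempty_of_ncard_ne_zero hpos.ne')
  omega

theorem ncard_eq_ncard_vertsOf_of_minimal_edgeRich (hX : Minimal G.EdgeRich X) :
    X.ncard = (G.vertsOf X).ncard := by
  obtain ⟨hfin, hne, hrich⟩ := hX.prop
  refine le_antisymm ?_ hrich
  obtain ⟨e, he⟩ := hne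
  have hV := finite_vertsOf (G := G) hfin
  have hXcard := ncard_sdiff_singleton_add_one he hfin
  rcases (X \ {e}).eq_empty_or_nonempty with hempty | hne'
  · have hpos := (ncard_pos hV).2 (vertsOf_nonempty ⟨e, he⟩)
    rw [hempty, ncard_empty] at hXcard
    omega
  · have hlt := ncard_lt_ncard_vertsOf_of_ssubset hX (sdiff_singleton_ssubset.2 he) hne'
    have hle := ncard_le_ncard (vertsOf_mono (G := G) (sdiff_subset (s := X) (t := {e}))) hV
    omega

theorem deg_eq_two_of_minimal_edgeRich (hX : Minimal G.EdgeRich X) (hv : v ∈ G.vertsOf X) :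
    G.deg X v = 2 := by
  have hV := finite_vertsOf (G := G) hX.prop.1
  have hsum : ∑ _w ∈ hV.toFinset, 2 = ∑ w ∈ hV.toFinset, G.deg X w := by
    rw [sum_deg hX.prop.1, ncard_eq_ncard_vertsOf_of_minimal_edgeRich hX, Finset.sum_const,
      smul_eq_mul, mul_comm, ncard_eq_toFinset_card _ hV]
  exact ((Finset.sum_eq_sum_iff_of_le fun w hw ↦
    two_le_deg_of_minimal_edgeRich hX (hV.mem_toFinset.1 hw)).1 hsum v (hV.mem_toFinset.2 hv)).symm

theorem not_disjoint_vertsOf_of_minimal_edgeRich (hX : Minimal G.EdgeRich X) (hYX : Y ⊂ X)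
    (hY : Y.Nonempty) : ¬ Disjoint (G.vertsOf Y) (G.vertsOf (X \ Y)) := by
  intro hdisj
  obtain ⟨hfin, -, hrich⟩ := hX.prop
  have hlt₁ := ncard_lt_ncard_vertsOf_of_ssubset hX hYX hY
  have hlt₂ := ncard_lt_ncard_vertsOf_of_ssubset hX (Y := X \ Y)
    (hYX.subset.sdiff_ssubset_of_nonempty hY) (nonempty_of_ssubset hYX)
  have hXcard := ncard_sdiff_add_ncard_of_subset hYX.subset hfin
  have hVcard := ncard_union_eq hdisj (finite_vertsOf (hfin.subset hYX.subset))
    (finite_vertsOf hfin.sdiff)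
  have hVsub := ncard_le_ncard (union_subset (vertsOf_mono (G := G) hYX.subset)
    (vertsOf_mono (G := G) (sdiff_subset (s := X) (t := Y)))) (finite_vertsOf hfin)
  omega

theorem reflTransGen_adjOn_of_mem_inc (he : e ∈ X) (hu : u ∈ G.inc e) (hv : v ∈ G.inc e) :
    Relation.ReflTransGen (G.AdjOn X) u v := by
  rcases eq_or_ne u v with rfl | huv
  · exact .refl
  · exact .single ⟨e, he, (Sym2.mem_and_mem_iff huv).1 ⟨hu, hv⟩⟩

theorem connectedOn_of_minimal_edgeRich (hX : Minimal G.EdgeRich X) : G.ConnectedOn X := by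
  rintro u ⟨e, he, hue⟩ v ⟨f, hf, hvf⟩
  by_contra huv
  let Y := {g ∈ X | ∀ w ∈ G.inc g, Relation.ReflTransGen (G.AdjOn X) u w}
  have hfY : f ∉ Y := fun h ↦ huv (h.2 v hvf)
  have heY : e ∈ Y := ⟨he, fun w hw ↦ reflTransGen_adjOn_of_mem_inc he hue hw⟩
  refine not_disjoint_vertsOf_of_minimal_edgeRich hX (Y := Y)
    ⟨sep_subset _ _, fun h ↦ hfY (h hf)⟩ ⟨e, heY⟩ (Set.disjoint_left.2 ?_)
  rintro w ⟨g, hg, hwg⟩ ⟨g', hg', hwg'⟩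
  exact hg'.2 ⟨hg'.1, fun w' hw' ↦
    (hg.2 w hwg).trans (reflTransGen_adjOn_of_mem_inc hg'.1 hwg' hw')⟩

theorem isCycle_of_minimal_edgeRich (hX : Minimal G.EdgeRich X) (hXE : X ⊆ G.E) : G.IsCycle X :=
  ⟨hXE, hX.prop.1, hX.prop.2.1, fun _ hv ↦ deg_eq_two_of_minimal_edgeRich hX hv,
    connectedOn_of_minimal_edgeRich hX⟩

theorem EdgeRich.exists_isCycle_subset (hX : G.EdgeRich X) (hXE : X ⊆ G.E) :
    ∃ C ⊆ X, G.IsCycle C := by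
  obtain ⟨C, hCX, hC⟩ := exists_minimal_subset_of_finite hX.1 hX
  exact ⟨C, hCX, isCycle_of_minimal_edgeRich hC (hCX.trans hXE)⟩

theorem hasTwoCycles_of_ncard_vertsOf_lt (hX : X.Finite) (hXE : X ⊆ G.E)
    (h : (G.vertsOf X).ncard < X.ncard) : G.HasTwoCycles X := by
  have hne : X.Nonempty := nonempty_of_ncard_ne_zero (Nat.ne_zero_of_lt h)
  obtain ⟨C, hCX, hC⟩ := EdgeRich.exists_isCycle_subset ⟨hX, hne, h.le⟩ hXE
  obtain ⟨e, he⟩ := hC.2.2.1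
  have hV := finite_vertsOf (G := G) hX
  have hVpos := (ncard_pos hV).2 (vertsOf_nonempty hne)
  have hVle := ncard_le_ncard (vertsOf_mono (G := G) (sdiff_subset (s := X) (t := {e}))) hV
  have hXcard := ncard_sdiff_singleton_add_one (hCX he) hX
  have hrich : G.EdgeRich (X \ {e}) :=
    ⟨hX.sdiff, nonempty_of_ncard_ne_zero (by omega), by omega⟩
  obtain ⟨C', hC'X, hC'⟩ := hrich.exists_isCycle_subset (sdiff_subset.trans hXE)
  exact ⟨C, C', hC, hC', fun h ↦ (hC'X (h ▸ he)).2 rfl, hCX, hC'X.trans sdiff_subset⟩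

theorem isCycle_singleton (he : e ∈ G.E) (hloop : G.inc e = Sym2.diag v) : G.IsCycle {e} := by
  have hV : G.vertsOf {e} = {v} := by
    ext w
    simp [vertsOf, hloop, Sym2.diag]
  have hrich : G.EdgeRich {e} := ⟨finite_singleton e, singleton_nonempty e, by simp [hV]⟩
  obtain ⟨C, hCe, hC⟩ := hrich.exists_isCycle_subset (singleton_subset_iff.2 he)
  exact (hC.2.2.1.subset_singleton_iff.1 hCe) ▸ hC

/-- A graph is *cycle-separated* if every ordered pair of distinct edges is separated by a cycle
through the first that avoids the second. This is what remains, at the level of a representing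
graph, of the cosimplicity of a matroid. -/
def CycleSeparated (G : Graph V α) : Prop :=
  G.E.Pairwise fun e f ↦ ∃ C, G.IsCycle C ∧ e ∈ C ∧ f ∉ C

theorem CycleSeparated.three_le_deg_or_isCycle_singleton (hG : G.CycleSeparated)
    (hfin : G.E.Finite) (hE : G.E.Nontrivial) (he : e ∈ G.E) (hv : v ∈ G.inc e) :
    3 ≤ G.deg G.E v ∨ G.IsCycle {e} := by
  by_cases huniq : ∀ f ∈ G.E, v ∈ G.inc f → f = e
  · right
    obtain ⟨f, hf, hfe⟩ := hE.exists_ne e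
    obtain ⟨C, hC, heC, -⟩ := hG he hf hfe.symm
    have hdeg : G.deg C v = 2 := hC.2.2.2.1 v ⟨e, heC, hv⟩
    have hone : {g ∈ C | v ∈ G.inc g}.ncard ≤ 1 := by
      rw [← ncard_singleton e]
      exact ncard_le_ncard fun g hg ↦ huniq g (hC.1 hg.1) hg.2
    obtain ⟨g, hgC, hg⟩ : {g ∈ C | G.inc g = Sym2.diag v}.Nonempty :=
      nonempty_of_ncard_ne_zero (by unfold deg at hdeg; omega)
    obtain rfl := huniq g (hC.1 hgC) (hg ▸ Sym2.mem_mk_left v v)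
    exact isCycle_singleton he hg
  · left
    push Not at huniq
    obtain ⟨f, hf, hvf, hfe⟩ := huniq
    obtain ⟨C, hC, heC, hfC⟩ := hG he hf hfe.symm
    have hdeg : G.deg C v = 2 := hC.2.2.2.1 v ⟨e, heC, hv⟩
    have hlt := deg_lt_deg hfin hC.1 hf hfC hvf
    omega

theorem CycleSeparated.ncard_le_ncard_three_le_deg (hG : G.CycleSeparated)
    (hfin : G.E.Finite) (hBE : B ⊆ G.E) (hB : ¬ G.HasTwoCycles B) (hB2 : B.Nontrivial) :
    B.ncard ≤ {v ∈ G.vertsOf G.E | 3 ≤ G.deg G.E v}.ncard := by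
  set W := {v ∈ G.vertsOf G.E | 3 ≤ G.deg G.E v}
  have hBfin := hfin.subset hBE
  have hW : W.Finite := (finite_vertsOf hfin).subset fun _ hv ↦ hv.1
  have hcases {e : α} (he : e ∈ B) {v : V} (hv : v ∈ G.inc e) : v ∈ W ∨ G.IsCycle {e} :=
    (hG.three_le_deg_or_isCycle_singleton hfin (hB2.mono hBE) (hBE he) hv).imp_left
      fun h ↦ ⟨⟨e, hBE he, hv⟩, h⟩
  by_cases hloop : ∃ l ∈ B, G.IsCycle {l}
  · -- `{l}` is the only cycle inside `B`, so the other edges of `B` span a forest on `W`.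
    obtain ⟨l, hl, hlC⟩ := hloop
    have hVW : G.vertsOf (B \ {l}) ⊆ W := by
      rintro v ⟨e, he, hv⟩
      refine (hcases he.1 hv).resolve_right fun heC ↦ hB
        ⟨{l}, {e}, hlC, heC, fun h ↦ he.2 (singleton_injective h).symm,
          singleton_subset_iff.2 hl, singleton_subset_iff.2 he.1⟩
    by_contra! hlt
    have hBcard := ncard_sdiff_singleton_add_one hl hBfin
    have hVcard := ncard_le_ncard hVW hW
    obtain ⟨e, he, hel⟩ := hB2.exists_ne l
    have hrich : G.EdgeRich (B \ {l}) := ⟨hBfin.sdiff, ⟨e, he, hel⟩, by omega⟩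
    obtain ⟨C, hCB, hC⟩ := hrich.exists_isCycle_subset (sdiff_subset.trans hBE)
    exact hB ⟨{l}, C, hlC, hC, by rintro rfl; exact (hCB rfl).2 rfl,
      singleton_subset_iff.2 hl, hCB.trans sdiff_subset⟩
  · push Not at hloop
    have hVW : G.vertsOf B ⊆ W := by
      rintro v ⟨e, he, hv⟩
      exact (hcases he hv).resolve_right (hloop e he)
    by_contra! hlt
    exact hB (hasTwoCycles_of_ncard_vertsOf_lt hBfin hBE ((ncard_le_ncard hVW hW).trans_lt hlt))

theorem CycleSeparated.ncard_le_three_mul_ncard_sdiff (hG : G.CycleSeparated)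
    (hfin : G.E.Finite) (hE : G.E.Nontrivial) (hBE : B ⊆ G.E) (hB : ¬ G.HasTwoCycles B) :
    G.E.ncard ≤ 3 * (G.E \ B).ncard := by
  have hcard := ncard_sdiff_add_ncard_of_subset hBE hfin
  by_cases hB2 : B.Nontrivial
  · have hBW := hG.ncard_le_ncard_three_le_deg hfin hBE hB hB2
    have hW := mul_ncard_setOf_le_deg_le (G := G) hfin 3
    omega
  · have hB1 : B.ncard ≤ 1 := (ncard_le_one (hfin.subset hBE)).2 (not_nontrivial_iff.1 hB2)
    have hE2 : 1 < G.E.ncard := (one_lt_ncard hfin).2 hE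
    omega

theorem LiftCircuit.exists_isCycle_subset_of_mem (hX : G.LiftCircuit X) (he : e ∈ X) :
    ∃ C ⊆ X, G.IsCycle C ∧ e ∈ C := by
  obtain ⟨hXE, C₁, C₂, hC₁, hC₂, hne, h₁, h₂⟩ := hX.prop
  by_contra! h
  have htwo : G.HasTwoCycles (X \ {e}) := ⟨C₁, C₂, hC₁, hC₂, hne,
    subset_sdiff_singleton h₁ (h C₁ h₁ hC₁), subset_sdiff_singleton h₂ (h C₂ h₂ hC₂)⟩
  exact (hX.le_of_le ⟨sdiff_subset.trans hXE, htwo⟩ sdiff_subset he).2 rfl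

theorem HasTwoCycles.exists_liftCircuit_subset (hX : G.HasTwoCycles X) :
    ∃ Y ⊆ X, G.LiftCircuit Y := by
  obtain ⟨C₁, C₂, hC₁, hC₂, hne, h₁, h₂⟩ := hX
  obtain ⟨Y, hY, hmin⟩ := exists_minimal_subset_of_finite (hC₁.2.1.union hC₂.2.1)
    (P := fun Y ↦ Y ⊆ G.E ∧ G.HasTwoCycles Y)
    ⟨union_subset hC₁.1 hC₂.1, C₁, C₂, hC₁, hC₂, hne, subset_union_left, subset_union_right⟩
  exact ⟨Y, hY.trans (union_subset h₁ h₂), hmin⟩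

end Graph

variable {α : Type u} {M : Matroid α} {D X : Set α} {e f : α}

theorem eRk_eq_matroid_eRk (M : Matroid α) (X : Set α) : eRk M X = M.eRk X := by
  refine le_antisymm (iSup_le fun I ↦ I.2.1.encard_le_eRk_of_subset I.2.2) ?_
  obtain ⟨I, hI⟩ := M.exists_isBasis' X
  rw [← hI.encard_eq_eRk]
  exact le_iSup (fun I : {I : Set α // M.Indep I ∧ I ⊆ X} ↦ (I : Set α).encard)
    ⟨I, hI.indep, hI.subset⟩

theorem eRank_eq_matroid_eRank (M : Matroid α) : eRank M = M.eRank := by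
  rw [eRank, eRk_eq_matroid_eRk, eRk_eq_eRank subset_rfl]

theorem InBL.exists_graph (hM : InBL M) : ∃ (V : Type u) (G : Graph V α), G.E = M.E ∧
    (∀ C, M.IsCircuit C → ∀ e ∈ C, ∃ C' ⊆ C, G.IsCycle C' ∧ e ∈ C') ∧
    ∀ B, M.Indep B → ¬ G.HasTwoCycles B := by
  obtain ⟨V, G, hE, hG⟩ | ⟨V, G, hE, hG⟩ := hM
  · exact ⟨V, G, hE.symm, fun C hC e he ↦ ⟨C, subset_rfl, (hG C).1 hC, he⟩,
      fun B hB ⟨C, _, hC, _, _, hCB, _⟩ ↦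
        IsCircuit.not_indep ((hG C).2 hC) (hB.subset hCB)⟩
  · refine ⟨V, G, hE.symm, fun C hC e he ↦ ((hG C).1 hC).exists_isCycle_subset_of_mem he,
      fun B hB htwo ↦ ?_⟩
    obtain ⟨C, hCB, hC⟩ := htwo.exists_liftCircuit_subset
    exact IsCircuit.not_indep ((hG C).2 hC) (hB.subset hCB)

/-- A matroid is *cosimple* if its dual is simple: it has neither coloops nor series pairs. This is
encoded by saying that every set of at most two elements is coindependent. -/
def IsCosimple (M : Matroid α) : Prop := ∀ D ⊆ M.E, D.encard ≤ 2 → M.Coindep D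

theorem IsCosimple.contract (hM : IsCosimple M) (C : Set α) : IsCosimple (M ／ C) := by
  intro D hD hcard
  rw [contract_ground, subset_sdiff] at hD
  exact (hM D hD.1 hcard).coindep_contract_of_disjoint hD.2

theorem IsCosimple.exists_isCircuit (hM : IsCosimple M) (he : e ∈ M.E) (hf : f ∈ M.E)
    (hef : e ≠ f) : ∃ C, M.IsCircuit C ∧ e ∈ C ∧ f ∉ C := by
  obtain ⟨B, hB, hBE⟩ :=
    (hM {e, f} (pair_subset he hf) (encard_pair hef).le).exists_isBase_subset_compl
  refine ⟨M.fundCircuit e B, hB.fundCircuit_isCircuit he fun h ↦ (hBE h).2 (.inl rfl),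
    M.mem_fundCircuit e B, fun h ↦ ?_⟩
  rcases M.fundCircuit_subset_insert e B h with rfl | hfB
  · exact hef rfl
  · exact (hBE hfB).2 (.inr rfl)

theorem IsCosimple.encard_ground_le_of_inBL [M.Finite] (hM : IsCosimple M) (hBL : InBL M)
    (hE : M.E.Nontrivial) : M.E.encard ≤ 3 * M✶.eRank := by
  obtain ⟨V, G, hGE, hcirc, hindep⟩ := hBL.exists_graph
  have hG : G.CycleSeparated := by
    intro e he f hf hef
    obtain ⟨C, hC, heC, hfC⟩ := hM.exists_isCircuit (hGE ▸ he) (hGE ▸ hf) hef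
    obtain ⟨C', hC'C, hC', heC'⟩ := hcirc C hC e heC
    exact ⟨C', hC', heC', fun h ↦ hfC (hC'C h)⟩
  obtain ⟨B, hB⟩ := M.exists_isBase
  have hfin := M.ground_finite
  have hcard := hG.ncard_le_three_mul_ncard_sdiff (hGE ▸ hfin) (hGE ▸ hE)
    (hGE ▸ hB.subset_ground) (hindep B hB.indep)
  rw [hGE] at hcard
  rw [← hB.encard_compl_eq, ← hfin.cast_ncard_eq, ← hfin.sdiff.cast_ncard_eq]
  exact_mod_cast hcard

theorem eRank_add_lt_of_forall_not_isKSep {k : ℕ} (h : ¬ ∃ X Y, IsKSep M k X Y) (hX : X ⊆ M.E)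
    (hkX : k ≤ X.encard) (hkY : k ≤ (M.E \ X).encard) :
    M.eRank + (k - 1 : ℕ) < M.eRk X + M.eRk (M.E \ X) := by
  by_contra! hle
  refine h ⟨X, M.E \ X, union_sdiff_cancel hX, disjoint_sdiff_right, hkX, hkY, ?_⟩
  simpa only [eRk_eq_matroid_eRk, eRank_eq_matroid_eRank] using hle

theorem MConnected.one_le_eRank_dual (hM : MConnected M) (hE : M.E.Nontrivial) :
    1 ≤ M✶.eRank := by
  by_contra! hlt
  obtain ⟨e, he⟩ := hE.nonempty
  have hrank := M.eRank_add_eRank_dual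
  rw [Order.lt_one_iff.1 hlt, add_zero] at hrank
  have hsep := eRank_add_lt_of_forall_not_isKSep hM (singleton_subset_iff.2 he)
    (by simp) (by rw [Nat.cast_one, one_le_encard_iff_nonempty]; exact hE.exists_ne e)
  refine hsep.not_ge ?_
  calc M.eRk {e} + M.eRk (M.E \ {e})
      ≤ ({e} : Set α).encard + (M.E \ {e}).encard :=
        add_le_add (M.eRk_le_encard _) (M.eRk_le_encard _)
    _ = M.eRank := by rw [add_comm, encard_sdiff_add_encard_of_subset (by simpa using he), hrank]
    _ ≤ M.eRank + (1 - 1 : ℕ) := le_self_add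

theorem ThreeConnected.eRank_lt_eRk_compl_add_one (hM : ThreeConnected M) (h4 : 4 ≤ M.E.encard)
    (hD : D ⊆ M.E) (hcard : D.encard = 2) : M.eRank < M.eRk (M.E \ D) + 1 := by
  have hcompl : 2 ≤ (M.E \ D).encard := by
    rw [← encard_sdiff_add_encard_of_subset hD, hcard] at h4
    exact (ENat.add_le_add_iff_right (ENat.ofNat_ne_top 2)).1 (by rwa [two_add_two_eq_four])
  have hsep := eRank_add_lt_of_forall_not_isKSep hM.2 hD hcard.ge hcompl
  have hle : M.eRk D + M.eRk (M.E \ D) ≤ M.eRk (M.E \ D) + 1 + 1 := by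
    rw [add_comm, add_assoc, one_add_one_eq_two, ← hcard]
    gcongr
    exact M.eRk_le_encard D
  exact lt_of_add_lt_add_right (hsep.trans_le hle)

theorem ThreeConnected.rankFinite (hM : ThreeConnected M) (h4 : 4 ≤ M.E.encard) :
    M.RankFinite := by
  obtain ⟨D, hD, hcard⟩ : ∃ D ⊆ M.E, D.encard = 2 :=
    exists_subset_encard_eq (le_trans (by norm_num) h4)
  exact eRank_lt_top_iff.1 ((hM.eRank_lt_eRk_compl_add_one h4 hD hcard).trans_le le_top)

theorem ThreeConnected.isCosimple (hM : ThreeConnected M) (h4 : 4 ≤ M.E.encard) :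
    IsCosimple M := by
  intro D hD hcard
  have := hM.rankFinite h4
  obtain ⟨D', hDD', hD', hcard'⟩ :=
    exists_superset_subset_encard_eq hD hcard (le_trans (by norm_num) h4)
  suffices h : M.Coindep D' from Indep.subset h hDD'
  rw [coindep_iff_compl_spanning hD', spanning_iff_eRk_le]
  exact Order.le_of_lt_add_one (hM.eRank_lt_eRk_compl_add_one h4 hD' hcard')

theorem eRank_dual_con_le (M : Matroid α) (C : Set α) : (con M C)✶.eRank ≤ M✶.eRank := by
  rw [con, dual_dual, del, eRank_restrict]
  exact M✶.eRk_le_eRank _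

theorem ThreeConnected.encard_ground_le (hM : ThreeConnected M) (he : e ∈ M.E)
    (hBL : InBL (con M {e})) : M.E.encard ≤ 3 * M✶.eRank + 1 := by
  rcases eq_or_ne M✶.eRank ⊤ with htop | htop
  · simp [htop]
  rcases M.E.subsingleton_or_nontrivial with hE | hE
  · exact (encard_le_one_iff_subsingleton.2 hE).trans le_add_self
  rcases lt_or_ge M.E.encard 4 with h4 | h4
  · calc M.E.encard ≤ 3 * 1 := Order.le_of_lt_add_one (h4.trans_eq (by norm_num))
      _ ≤ 3 * M✶.eRank := by gcongr; exact hM.1.one_le_eRank_dual hE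
      _ ≤ 3 * M✶.eRank + 1 := le_self_add
  have hrank := hM.rankFinite h4
  have : M.Finite := ⟨by
    rw [← encard_ne_top_iff, ← M.eRank_add_eRank_dual]
    exact WithTop.add_ne_top.2 ⟨M.eRank_ne_top_iff.2 hrank, htop⟩⟩
  have hcard := encard_sdiff_singleton_add_one he
  have hQE : (M ／ {e}).E.Nontrivial := by
    rw [contract_ground, ← one_lt_encard_iff_nontrivial]
    refine (ENat.add_lt_add_iff_right ENat.one_ne_top).1 ?_
    rw [hcard]
    exact lt_of_lt_of_le (by norm_num) h4
  calc M.E.encard = (M ／ {e}).E.encard + 1 := hcard.symm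
    _ ≤ 3 * (con M {e})✶.eRank + 1 := by
      gcongr
      exact ((hM.isCosimple h4).contract {e}).encard_ground_le_of_inBL hBL hQE
    _ ≤ 3 * M✶.eRank + 1 := by gcongr; exact eRank_dual_con_le M {e}

theorem ExcludedMinorBL.inBL_con (hM : ExcludedMinorBL M) (he : e ∈ M.E) : InBL (con M {e}) := by
  refine hM.2 _ ⟨⟨{e}, ∅, (delete_empty _).symm⟩, fun h ↦ ?_⟩
  have he' : e ∈ (M ／ {e}).E := (congrArg Matroid.E h).symm ▸ he
  exact he'.2 rfl

theorem statement_18_general {α : Type u} {M : Matroid α} (hM : ThreeConnected M) {e : α}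
    (he : e ∈ M.E) (hBL : InBL (con M {e})) : eRank M ≤ 2 * eRank M✶ + 1 := by
  simp only [eRank_eq_matroid_eRank]
  rcases eq_or_ne M✶.eRank ⊤ with htop | htop
  · simp [htop]
  refine (ENat.add_le_add_iff_right htop).1 ?_
  calc M.eRank + M✶.eRank = M.E.encard := M.eRank_add_eRank_dual
    _ ≤ 3 * M✶.eRank + 1 := hM.encard_ground_le he hBL
    _ = 2 * M✶.eRank + 1 + M✶.eRank := by ring

theorem statement_18 {α : Type u} (M : Matroid α) (h3 : ThreeConnected M)
    (hex : ExcludedMinorBL M) (hU : HasU24Minor M) (hcr : eRank M✶ ≤ 4) :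
    eRank M ≤ 9 := by
  rcases M.E.eq_empty_or_nonempty with hE | ⟨e, he⟩
  · have hrank : eRank M ≤ M.E.encard := iSup_le fun I ↦ encard_le_encard I.2.2
    exact hrank.trans (by simp [hE])
  · calc eRank M ≤ 2 * eRank M✶ + 1 := statement_18_general h3 he (hex.inBL_con he)
      _ ≤ 2 * 4 + 1 := by gcongr
      _ = 9 := by norm_num

end BLFormal
end

section
/- Let M be a 3-connected excluded minor of \overline{BL} having a U_{2,4}-minor. Then M has no restriction isomorphic to U_{2,5}; that is, there is no 5-element subset X of E(M) with M|X isomorphic to U_{2,5}. -/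
/-!
Suppose `M ↾ X` is isomorphic to `U_{2,5}` and every `M \ f` with `f ∈ X` is graphic or bicircular
lift. Since `M \ f` keeps the four-point line `X \ {f}`, it is not graphic, so `M \ f = L(G_f)`.
A four-point line of `L(G_f)` consists of parallel edges, with at most one loop in place of one of
them, so three of its elements have the same ends; exchanging two edges with the same ends is an
automorphism of `L(G_f)`.

Take `f ∈ X` and two elements `e, b` of `X \ {f}` with the same ends in `G_f`. Then `e` is freely
placed on `X`: if `Z ∌ e` spans `e`, then either `Z` spans `f`, or exchanging `e` and `b` in `M \ f`
shows that `Z` spans `b`; in both cases `Z` spans two points of the line, hence all of it.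

In `M \ e = L(G_e)` some triple `T ⊆ X \ {e}` has common ends. Add `e` to `G_e` as a further edge
with these ends. In the lift circuits of the new graph `e` is again freely placed on `T`, and a free
placement determines the circuits through `e`. So `M` is the bicircular lift matroid of the new
graph.
-/


open Set Matroid

universe u

namespace BLFormal

namespace Graph

variable {V α β : Type u} {G : Graph V α} {H : Graph V β} {C D T X Y Z : Set α}

/-! ### Cycles and lift circuits -/

lemma IsCycle.mem_of_mem_inc (hC : G.IsCycle C) (hD : G.IsCycle D) (hCD : C ⊆ D) {v : V}
    (hv : v ∈ G.vertsOf C) {x : α} (hx : x ∈ D) (hvx : v ∈ G.inc x) : x ∈ C := by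
  have hdegC : G.deg C v = 2 := hC.2.2.2.1 v hv
  have hdegD : G.deg D v = 2 := hD.2.2.2.1 v ⟨x, hx, hvx⟩
  have hfin (p : α → Prop) : {e ∈ D | p e}.Finite := hD.2.1.subset (sep_subset D p)
  have hsub (p : α → Prop) : {e ∈ C | p e} ⊆ {e ∈ D | p e} := fun _ h => ⟨hCD h.1, h.2⟩
  have hloops := ncard_le_ncard (hsub (G.inc · = Sym2.diag v)) (hfin _)
  have heq : {e ∈ C | v ∈ G.inc e} = {e ∈ D | v ∈ G.inc e} :=
    eq_of_subset_of_ncard_le (hsub (v ∈ G.inc ·)) (by unfold deg at hdegC hdegD; omega) (hfin _)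
  exact (heq.ge ⟨hx, hvx⟩).1

lemma IsCycle.eq_of_subset (hC : G.IsCycle C) (hD : G.IsCycle D) (hCD : C ⊆ D) : C = D := by
  obtain ⟨c, hc⟩ := hC.2.2.1
  have hu : (G.inc c).out.1 ∈ G.inc c := Sym2.out_fst_mem _
  have hreach : ∀ w, Relation.ReflTransGen (G.AdjOn D) (G.inc c).out.1 w → w ∈ G.vertsOf C := by
    intro w hw
    induction hw with
    | refl => exact ⟨c, hc, hu⟩
    | tail _ hadj ih =>
      obtain ⟨x, hx, hxe⟩ := hadj
      exact ⟨x, hC.mem_of_mem_inc hD hCD ih hx (by simp [hxe]), by simp [hxe]⟩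
  refine hCD.antisymm fun x hx => ?_
  have hw : (G.inc x).out.1 ∈ G.inc x := Sym2.out_fst_mem _
  have hconn := hD.2.2.2.2 _ ⟨c, hCD hc, hu⟩ _ ⟨x, hx, hw⟩
  exact hC.mem_of_mem_inc hD hCD (hreach _ hconn) hx hw

lemma isCycle_singleton_s19 {x : α} {v : V} (hx : x ∈ G.E) (hv : G.inc x = Sym2.diag v) :
    G.IsCycle {x} := by
  have hverts : ∀ u ∈ G.vertsOf {x}, u = v := by
    rintro u ⟨y, rfl, hu⟩
    simpa [hv, Sym2.diag] using hu
  refine ⟨by simpa using hx, finite_singleton x, singleton_nonempty x, fun u hu => ?_,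
    fun u hu w hw => by rw [hverts u hu, hverts w hw]⟩
  obtain rfl := hverts u hu
  have hinc : {e ∈ ({x} : Set α) | u ∈ G.inc e} = {x} := by
    rw [sep_eq_self_iff_mem_true]
    simp [hv, Sym2.diag]
  have hdiag : {e ∈ ({x} : Set α) | G.inc e = Sym2.diag u} = {x} := by
    rw [sep_eq_self_iff_mem_true]
    simp [hv]
  rw [deg, hinc, hdiag, ncard_singleton]

lemma IsCycle.ncard_incident_eq_two (hC : G.IsCycle C) (hnt : C.Nontrivial) {x : α} (hx : x ∈ C)
    {v : V} (hv : v ∈ G.inc x) : {e ∈ C | v ∈ G.inc e}.ncard = 2 := by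
  have hloop : {e ∈ C | G.inc e = Sym2.diag v} = ∅ := by
    refine eq_empty_of_forall_notMem fun y ⟨hy, hyv⟩ => ?_
    have hyC := (isCycle_singleton_s19 (hC.1 hy) hyv).eq_of_subset hC (singleton_subset_iff.2 hy)
    exact not_nontrivial_singleton (hyC ▸ hnt)
  simpa [deg, hloop] using hC.2.2.2.1 v ⟨x, hx, hv⟩

lemma IsCycle.inc_eq_of_ncard_eq_two (hC : G.IsCycle C) (hC2 : C.ncard = 2) {x y : α} (hx : x ∈ C)
    (hy : y ∈ C) : G.inc x = G.inc y := by
  have hnt : C.Nontrivial := by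
    have := hC.2.1.to_subtype
    exact one_lt_ncard_iff_nontrivial.1 (by omega)
  have hmem {z w : α} (hz : z ∈ C) (hw : w ∈ C) (v : V) (hv : v ∈ G.inc z) : v ∈ G.inc w := by
    have hall : {e ∈ C | v ∈ G.inc e} = C := eq_of_subset_of_ncard_le (sep_subset _ _)
      (by rw [hC.ncard_incident_eq_two hnt hz hv, hC2]) hC.2.1
    exact (hall.ge hw).2
  exact Sym2.ext fun v => ⟨hmem hx hy v, hmem hy hx v⟩

lemma IsCycle.mem_inc_iff_notMem_inc {x y z : α} (hC : G.IsCycle {x, y, z}) (hxy : x ≠ y)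
    (hxz : x ≠ z) (hyz : y ≠ z) {v : V} (hv : v ∈ G.inc x) : v ∈ G.inc y ↔ v ∉ G.inc z := by
  have hcard := hC.ncard_incident_eq_two ⟨x, by simp, y, by simp, hxy⟩ (by simp) hv
  by_cases hy : v ∈ G.inc y <;> by_cases hz : v ∈ G.inc z
  · have hall : {e ∈ ({x, y, z} : Set α) | v ∈ G.inc e} = {x, y, z} := by
      rw [sep_eq_self_iff_mem_true]
      simp [hv, hy, hz]
    rw [hall, ncard_eq_three.2 ⟨x, y, z, hxy, hxz, hyz, rfl⟩] at hcard
    omega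
  · simp [hy, hz]
  · simp [hy, hz]
  · have hone : {e ∈ ({x, y, z} : Set α) | v ∈ G.inc e} = {x} := by
      ext w
      simp only [mem_insert_iff, mem_singleton_iff]
      grind
    rw [hone, ncard_singleton] at hcard
    omega

/- An end `v` of `a` lies on exactly one edge of each pair in `{b, c, d}`, which is impossible. -/
lemma exists_triple_not_isCycle (G : Graph V α) (hY : 4 ≤ Y.encard) :
    ∃ T ⊆ Y, T.encard = 3 ∧ ¬ G.IsCycle T := by
  by_contra! hcyc
  obtain ⟨Y', hY'Y, hY'⟩ := exists_subset_encard_eq hY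
  obtain ⟨a, b, c, d, hab, hac, had, hbc, hbd, hcd, rfl⟩ := encard_eq_four.1 hY'
  have htriple : ∀ x ∈ ({a, b, c, d} : Set α), ∀ y ∈ ({a, b, c, d} : Set α), a ≠ x → a ≠ y →
      x ≠ y → G.IsCycle {a, x, y} := fun x hx y hy hax hay hxy =>
    hcyc _ ((insert_subset (by simp) (pair_subset hx hy)).trans hY'Y)
      (encard_eq_three.2 ⟨a, x, y, hax, hay, hxy, rfl⟩)
  have hv : (G.inc a).out.1 ∈ G.inc a := Sym2.out_fst_mem _
  have hbc' := (htriple b (by simp) c (by simp) hab hac hbc).mem_inc_iff_notMem_inc hab hac hbc hv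
  have hbd' := (htriple b (by simp) d (by simp) hab had hbd).mem_inc_iff_notMem_inc hab had hbd hv
  have hcd' := (htriple c (by simp) d (by simp) hac had hcd).mem_inc_iff_notMem_inc hac had hcd hv
  tauto

lemma LiftCircuit.subset_union (hX : G.LiftCircuit X) (hC : G.IsCycle C) (hD : G.IsCycle D)
    (hCD : C ≠ D) (hCX : C ⊆ X) (hDX : D ⊆ X) : X ⊆ C ∪ D :=
  hX.2 ⟨union_subset hC.1 hD.1, C, D, hC, hD, hCD, subset_union_left, subset_union_right⟩
    (union_subset hCX hDX)

lemma LiftCircuit.inc_eq_of_encard_eq_three (hT : G.LiftCircuit T) (hT3 : T.encard = 3)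
    (hloop : ∀ x ∈ T, ¬ G.IsCycle {x}) {x y : α} (hx : x ∈ T) (hy : y ∈ T) :
    G.inc x = G.inc y := by
  obtain ⟨C, D, hC, hD, hCD, hCT, hDT⟩ := hT.1.2
  have hTfin : T.Finite := finite_of_encard_eq_coe hT3
  have hT3' : T.ncard = 3 := by simp [ncard_def, hT3]
  have hncard {C D : Set α} (hC : G.IsCycle C) (hD : G.IsCycle D) (hCD : C ≠ D) (hCT : C ⊆ T)
      (hDT : D ⊆ T) : C.ncard = 2 := by
    have hpos : 0 < C.ncard := (ncard_pos hC.2.1).2 hC.2.2.1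
    have hne1 : C.ncard ≠ 1 := by
      rintro h1
      obtain ⟨z, rfl⟩ := ncard_eq_one.1 h1
      exact hloop z (hCT rfl) hC
    have hlt3 : C.ncard < T.ncard := by
      refine ncard_lt_ncard (hCT.ssubset_of_ne ?_) hTfin
      rintro rfl
      exact hCD (hD.eq_of_subset hC hDT).symm
    omega
  have hC2 := hncard hC hD hCD hCT hDT
  have hD2 := hncard hD hC hCD.symm hDT hCT
  have hunion : C ∪ D = T := (union_subset hCT hDT).antisymm (hT.subset_union hC hD hCD hCT hDT)
  have hinter : (C ∩ D).Nonempty := by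
    have hadd := ncard_union_add_ncard_inter C D hC.2.1 hD.2.1
    rw [hunion] at hadd
    exact nonempty_of_ncard_ne_zero (by omega)
  obtain ⟨w, hwC, hwD⟩ := hinter
  have hw : ∀ z ∈ T, G.inc z = G.inc w := fun z hz => (hunion.ge hz).elim
    (fun hzC => hC.inc_eq_of_ncard_eq_two hC2 hzC hwC)
    (fun hzD => hD.inc_eq_of_ncard_eq_two hD2 hzD hwD)
  rw [hw x hx, hw y hy]

lemma subsingleton_loops_of_triples_liftCircuit (hY : 3 ≤ Y.encard)
    (hT : ∀ T ⊆ Y, T.encard = 3 → G.LiftCircuit T) : {x ∈ Y | G.IsCycle {x}}.Subsingleton := by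
  rintro p ⟨hpY, hp⟩ q ⟨hqY, hq⟩
  by_contra hpq
  have hpq2 : ({p, q} : Set α).encard = 2 := encard_pair hpq
  obtain ⟨T, hpqT, hTY, hT3⟩ := exists_superset_subset_encard_eq (pair_subset hpY hqY)
    (hpq2.trans_le (by norm_num)) hY
  have hTpq : T ⊆ {p, q} := (hT T hTY hT3).subset_union hp hq (singleton_injective.ne hpq)
    (singleton_subset_iff.2 (hpqT (by simp))) (singleton_subset_iff.2 (hpqT (by simp)))
  have hle := encard_le_encard hTpq
  rw [hT3, hpq2] at hle
  exact absurd hle (by norm_num)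

lemma exists_triple_inc_eq (hY : 4 ≤ Y.encard)
    (hT : ∀ T ⊆ Y, T.encard = 3 → G.LiftCircuit T) :
    ∃ T ⊆ Y, T.encard = 3 ∧ ∀ x ∈ T, ∀ y ∈ T, G.inc x = G.inc y := by
  have hsub := subsingleton_loops_of_triples_liftCircuit ((by norm_num : (3 : ℕ∞) ≤ 4).trans hY) hT
  have hnonloops : 3 ≤ (Y \ {x ∈ Y | G.IsCycle {x}}).encard := by
    have hle := hY.trans (encard_le_encard_sdiff_add_encard Y {x ∈ Y | G.IsCycle {x}})
    have hle1 := hle.trans (add_le_add_right (encard_le_one_iff_subsingleton.2 hsub) _)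
    have hfour : (3 : ℕ∞) + 1 = 4 := by norm_num
    exact (ENat.add_le_add_iff_right ENat.one_ne_top).1 (hfour.trans_le hle1)
  obtain ⟨T, hTsub, hT3⟩ := exists_subset_encard_eq hnonloops
  have hTY : T ⊆ Y := hTsub.trans sdiff_subset
  exact ⟨T, hTY, hT3, fun x hx y hy => (hT T hTY hT3).inc_eq_of_encard_eq_three hT3
    (fun z hz hzl => (hTsub hz).2 ⟨hTY hz, hzl⟩) hx hy⟩

/-! ### Exchanging edges with the same ends -/

section EdgeIso

/-- `f` identifies `X` with a set of elements of `H`, so that the edges of `G` in `X` correspond to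
edges of `H` with the same ends. Elements of `X` that are not edges of `G` are allowed; they go to
non-edges of `H`. -/
structure IsEdgeIsoOn (f : α → β) (G : Graph V α) (H : Graph V β) (X : Set α) : Prop where
  injOn : InjOn f X
  mem_iff : ∀ x ∈ X, f x ∈ H.E ↔ x ∈ G.E
  inc_eq : ∀ x ∈ X, H.inc (f x) = G.inc x

variable {f : α → β}

lemma IsEdgeIsoOn.mono (hf : IsEdgeIsoOn f G H X) (hYX : Y ⊆ X) : IsEdgeIsoOn f G H Y :=
  ⟨hf.injOn.mono hYX, fun x hx => hf.mem_iff x (hYX hx), fun x hx => hf.inc_eq x (hYX hx)⟩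

lemma IsEdgeIsoOn.image_subset_iff (hf : IsEdgeIsoOn f G H X) : f '' X ⊆ H.E ↔ X ⊆ G.E := by
  rw [Set.image_subset_iff]
  exact forall₂_congr hf.mem_iff

lemma IsEdgeIsoOn.vertsOf_image (hf : IsEdgeIsoOn f G H X) :
    H.vertsOf (f '' X) = G.vertsOf X := by
  ext v
  simp only [vertsOf, mem_ofPred_eq, exists_mem_image]
  exact exists_congr fun x => and_congr_right fun hx => by rw [hf.inc_eq x hx]

lemma IsEdgeIsoOn.deg_image (hf : IsEdgeIsoOn f G H X) (v : V) :
    H.deg (f '' X) v = G.deg X v := by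
  have hsep (p : Sym2 V → Prop) :
      {e ∈ f '' X | p (H.inc e)}.ncard = {e ∈ X | p (G.inc e)}.ncard := by
    rw [← (hf.injOn.mono (sep_subset X (p <| G.inc ·))).ncard_image]
    congr 1
    ext y
    constructor
    · rintro ⟨⟨x, hx, rfl⟩, hp⟩
      exact ⟨x, ⟨hx, hf.inc_eq x hx ▸ hp⟩, rfl⟩
    · rintro ⟨x, ⟨hx, hp⟩, rfl⟩
      exact ⟨mem_image_of_mem f hx, (hf.inc_eq x hx).symm ▸ hp⟩
  rw [deg, deg, hsep (v ∈ ·), hsep (· = Sym2.diag v)]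

lemma IsEdgeIsoOn.adjOn_image (hf : IsEdgeIsoOn f G H X) : H.AdjOn (f '' X) = G.AdjOn X := by
  ext u v
  simp only [AdjOn, exists_mem_image]
  exact exists_congr fun x => and_congr_right fun hx => by rw [hf.inc_eq x hx]

lemma IsEdgeIsoOn.isCycle_image_iff (hf : IsEdgeIsoOn f G H C) :
    H.IsCycle (f '' C) ↔ G.IsCycle C := by
  simp only [IsCycle, ConnectedOn, hf.image_subset_iff, finite_image_iff hf.injOn, image_nonempty,
    hf.vertsOf_image, hf.deg_image, hf.adjOn_image]

lemma IsEdgeIsoOn.hasTwoCycles_image_iff (hf : IsEdgeIsoOn f G H X) :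
    H.HasTwoCycles (f '' X) ↔ G.HasTwoCycles X := by
  constructor
  · rintro ⟨_, _, hC, hD, hCD, hCX', hDX'⟩
    obtain ⟨C, hCX, rfl⟩ := subset_image_iff.1 hCX'
    obtain ⟨D, hDX, rfl⟩ := subset_image_iff.1 hDX'
    exact ⟨C, D, (hf.mono hCX).isCycle_image_iff.1 hC, (hf.mono hDX).isCycle_image_iff.1 hD,
      ne_of_apply_ne (f '' ·) hCD, hCX, hDX⟩
  · rintro ⟨C, D, hC, hD, hCD, hCX, hDX⟩
    exact ⟨f '' C, f '' D, (hf.mono hCX).isCycle_image_iff.2 hC,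
      (hf.mono hDX).isCycle_image_iff.2 hD, (hf.injOn.image_eq_image_iff hCX hDX).not.2 hCD,
      image_mono hCX, image_mono hDX⟩

lemma IsEdgeIsoOn.liftCircuit_image_iff (hf : IsEdgeIsoOn f G H X) :
    H.LiftCircuit (f '' X) ↔ G.LiftCircuit X := by
  have hiff {Y : Set α} (hYX : Y ⊆ X) :
      f '' Y ⊆ H.E ∧ H.HasTwoCycles (f '' Y) ↔ Y ⊆ G.E ∧ G.HasTwoCycles Y :=
    and_congr (hf.mono hYX).image_subset_iff (hf.mono hYX).hasTwoCycles_image_iff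
  refine and_congr (hiff subset_rfl) ⟨fun hmin Y hY hYX => ?_, fun hmin Y' hY' hY'X => ?_⟩
  · exact (hf.injOn.image_subset_image_iff subset_rfl hYX).1
      (hmin ((hiff hYX).2 hY) (image_mono hYX))
  · obtain ⟨Y, hYX, rfl⟩ := subset_image_iff.1 hY'X
    exact image_mono (hmin ((hiff hYX).1 hY') hYX)

open Classical in
lemma LiftCircuit.exchange {a b : α} (hC : G.LiftCircuit C) (hb : b ∈ G.E)
    (hab : G.inc a = G.inc b) (haC : a ∈ C) (hbC : b ∉ C) :
    G.LiftCircuit (insert b C \ {a}) := by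
  rw [← Equiv.image_swap_of_mem_of_notMem haC hbC]
  have hcases : ∀ x ∈ C, x = a ∨ Equiv.swap a b x = x := fun x hx =>
    or_iff_not_imp_left.2 fun hxa => Equiv.swap_apply_of_ne_of_ne hxa (ne_of_mem_of_not_mem hx hbC)
  have hswap : IsEdgeIsoOn (Equiv.swap a b) G G C := by
    refine ⟨(Equiv.injective _).injOn, fun x hx => ?_, fun x hx => ?_⟩
    · rcases hcases x hx with rfl | hfix
      · simp [hb, hC.1.1 haC]
      · rw [hfix]
    · rcases hcases x hx with rfl | hfix
      · simp [hab]
      · rw [hfix]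
  exact hswap.liftCircuit_image_iff.2 hC

end EdgeIso

/-! ### Spanning by lift circuits -/

section LiftSpans

/-- `Z` spans `x` in the bicircular lift matroid of `G`, expressed through lift circuits so that no
matroid on the edges of `G` is needed. Only meant for `x ∉ Z`. -/
def LiftSpans (G : Graph V α) (Z : Set α) (x : α) : Prop :=
  ∃ C ⊆ insert x Z, G.LiftCircuit C ∧ x ∈ C

lemma LiftSpans.of_inc_eq {a b : α} (h : G.LiftSpans Z a) (hb : b ∈ G.E)
    (hab : G.inc a = G.inc b) (hbZ : b ∉ Z) : G.LiftSpans Z b := by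
  obtain rfl | hne := eq_or_ne a b
  · exact h
  obtain ⟨C, hCZ, hC, haC⟩ := h
  have hbC : b ∉ C := fun hbC => (hCZ hbC).elim hne.symm hbZ
  refine ⟨insert b C \ {a}, ?_, hC.exchange hb hab haC hbC, by simp [hne.symm]⟩
  rintro x ⟨rfl | hx, hxa⟩
  · exact mem_insert _ _
  · exact mem_insert_of_mem _ ((hCZ hx).resolve_left hxa)

open Classical in
/-- The graph obtained from `G` by adding `e` as an edge with the same ends as `t`. Meant for
`e ∉ G.E`; otherwise the ends of `e` change. -/
noncomputable def addParallel (G : Graph V α) (e t : α) : Graph V α :=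
  ⟨insert e G.E, Function.update G.inc e (G.inc t)⟩

variable {e t : α}

lemma addParallel_inc_self : (G.addParallel e t).inc e = G.inc t := by
  simp [addParallel]

lemma addParallel_inc_of_ne {x : α} (hx : x ≠ e) : (G.addParallel e t).inc x = G.inc x := by
  simp [addParallel, hx]

lemma liftCircuit_addParallel_iff (heC : e ∉ C) :
    (G.addParallel e t).LiftCircuit C ↔ G.LiftCircuit C := by
  have hne : ∀ x ∈ C, x ≠ e := fun x hx => ne_of_mem_of_not_mem hx heC
  have hid : IsEdgeIsoOn id G (G.addParallel e t) C :=
    ⟨injOn_id C, fun x hx => by simp [addParallel, hne x hx],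
      fun x hx => addParallel_inc_of_ne (hne x hx)⟩
  simpa using hid.liftCircuit_image_iff

lemma liftSpans_addParallel_iff {x : α} (hxe : x ≠ e) (heZ : e ∉ Z) :
    (G.addParallel e t).LiftSpans Z x ↔ G.LiftSpans Z x :=
  exists_congr fun _ => and_congr_right fun hC => by
    rw [liftCircuit_addParallel_iff fun he => (hC he).elim hxe.symm heZ]

lemma liftSpans_addParallel_self_iff (ht : t ∈ G.E) (hte : t ≠ e) (heZ : e ∉ Z) (htZ : t ∉ Z) :
    (G.addParallel e t).LiftSpans Z e ↔ G.LiftSpans Z t := by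
  have hinc : (G.addParallel e t).inc e = (G.addParallel e t).inc t := by
    rw [addParallel_inc_self, addParallel_inc_of_ne hte]
  rw [← liftSpans_addParallel_iff hte heZ]
  exact ⟨fun h => h.of_inc_eq (mem_insert_of_mem e ht) hinc htZ,
    fun h => h.of_inc_eq (mem_insert e G.E) hinc.symm heZ⟩

end LiftSpans

end Graph

variable {α V : Type u} {M N : Matroid α} {G : Graph V α} {F T X Y Z : Set α} {e f : α}

lemma IsLiftRep.mem_closure_iff {x : α} (hG : IsLiftRep G N) (hx : x ∉ Z) :
    x ∈ N.closure Z ↔ G.LiftSpans Z x := by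
  rw [mem_closure_iff_exists_isCircuit hx]
  simp only [Graph.LiftSpans, ← hG.2, Circuit, isCircuit_def]

lemma IsLiftRep.mem_closure_of_inc_eq {a b : α} (hG : IsLiftRep G N) (hb : b ∈ N.E)
    (hab : G.inc a = G.inc b) (ha : a ∈ N.closure Z) (haZ : a ∉ Z) : b ∈ N.closure Z := by
  by_cases hbZ : b ∈ Z
  · exact N.mem_closure_of_mem' hbZ hb
  · exact (hG.mem_closure_iff hbZ).2 <|
      ((hG.mem_closure_iff haZ).1 ha).of_inc_eq (hG.1 ▸ hb) hab hbZ

/-! ### Deletions, lines and free placement -/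

lemma del_eq_delete (M : Matroid α) (D : Set α) : del M D = M ＼ D := rfl

lemma isStrictMinor_del_singleton (he : e ∈ M.E) : IsStrictMinor (del M {e}) M := by
  have hcon : con M ∅ = M := by
    rw [con, del, sdiff_empty, restrict_ground_eq_self, dual_dual]
  refine ⟨⟨∅, {e}, by rw [hcon]⟩, fun h => ?_⟩
  have heE : e ∈ (del M {e}).E := h.symm ▸ he
  exact heE.2 rfl

lemma circuit_del_singleton_iff {C : Set α} (heC : e ∉ C) :
    Circuit (del M {e}) C ↔ M.IsCircuit C := by
  rw [del_eq_delete, Circuit, ← isCircuit_def, delete_isCircuit_iff, disjoint_singleton_right,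
    and_iff_left heC]

lemma mem_closure_del_singleton_iff {x : α} (hxe : x ≠ e) (heZ : e ∉ Z) :
    x ∈ (del M {e}).closure Z ↔ x ∈ M.closure Z := by
  rw [del_eq_delete, delete_closure_eq, sdiff_singleton_eq_self heZ]
  simp [hxe]

/-- A set `X` of elements whose triples are circuits. For `|X| ≥ 3` this says that `M ↾ X` is
isomorphic to `U_{2,|X|}`. -/
def IsUniformLine (M : Matroid α) (X : Set α) : Prop :=
  X ⊆ M.E ∧ ∀ T ⊆ X, T.encard = 3 → M.IsCircuit T

lemma IsUnif.isUniformLine {n : ℕ} (hU : IsUnif 2 n (M ↾ X)) (hXE : X ⊆ M.E) :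
    IsUniformLine M X := by
  refine ⟨hXE, fun T hTX hT3 => ?_⟩
  have hT : (M ↾ X).IsCircuit T := (hU.2 T).2 ⟨hTX, by rw [hT3]; norm_num⟩
  exact ((restrict_isCircuit_iff hXE).1 hT).1

lemma IsUniformLine.del_singleton (hX : IsUniformLine M X) (f : α) :
    IsUniformLine (del M {f}) (X \ {f}) := by
  refine ⟨sdiff_subset_sdiff_left hX.1, fun T hTX hT3 => ?_⟩
  exact isCircuit_def.2 <| (circuit_del_singleton_iff fun hf => (hTX hf).2 rfl).2 <|
    hX.2 T (hTX.trans sdiff_subset) hT3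

lemma IsUniformLine.subset_closure (hX : IsUniformLine M X) {a b : α} (ha : a ∈ X) (hb : b ∈ X)
    (hab : a ≠ b) (haZ : a ∈ M.closure Z) (hbZ : b ∈ M.closure Z) : X ⊆ M.closure Z := by
  intro c hc
  obtain rfl | hca := eq_or_ne c a
  · exact haZ
  obtain rfl | hcb := eq_or_ne c b
  · exact hbZ
  have hC : M.IsCircuit {c, a, b} := hX.2 _ (insert_subset hc (pair_subset ha hb))
    (encard_eq_three.2 ⟨c, a, b, hca, hcb, hab, rfl⟩)
  have hcab : c ∈ M.closure {a, b} :=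
    (mem_closure_iff_exists_isCircuit (by simp [hca, hcb])).2 ⟨_, subset_rfl, hC, by simp⟩
  exact closure_subset_closure_of_subset_closure (pair_subset haZ hbZ) hcab

lemma IsUniformLine.not_isGraphic (hY : IsUniformLine N Y) (hY4 : 4 ≤ Y.encard) :
    ¬ IsGraphic N := by
  rintro ⟨V, G, hG⟩
  obtain ⟨T, hTY, hT3, hT⟩ := G.exists_triple_not_isCycle hY4
  exact hT ((hG.2 T).1 (hY.2 T hTY hT3))

lemma IsUniformLine.exists_triple_inc_eq (hY : IsUniformLine N Y) (hY4 : 4 ≤ Y.encard)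
    (hN : InBL N) : ∃ (V : Type u) (G : Graph V α), IsLiftRep G N ∧
      ∃ T ⊆ Y, T.encard = 3 ∧ ∀ x ∈ T, ∀ y ∈ T, G.inc x = G.inc y := by
  obtain ⟨V, G, hG⟩ := hN.resolve_left (hY.not_isGraphic hY4)
  exact ⟨V, G, hG, Graph.exists_triple_inc_eq hY4 fun T hTY hT3 => (hG.2 T).1 (hY.2 T hTY hT3)⟩

/-- `e` is freely placed on the flat spanned by `F`: a set that spans `e` without containing it
spans all of `F`. -/
def FreelyPlaced (M : Matroid α) (e : α) (F : Set α) : Prop :=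
  e ∈ M.closure F ∧ ∀ Z, e ∉ Z → e ∈ M.closure Z → F ⊆ M.closure Z

lemma FreelyPlaced.mem_closure_iff (he : FreelyPlaced M e F) (heZ : e ∉ Z) :
    e ∈ M.closure Z ↔ F ⊆ M.closure Z :=
  ⟨he.2 Z heZ, fun hFZ => closure_subset_closure_of_subset_closure hFZ he.1⟩

lemma FreelyPlaced.mono (he : FreelyPlaced M e F) (hTF : T ⊆ F) (heT : e ∈ M.closure T) :
    FreelyPlaced M e T :=
  ⟨heT, fun Z heZ heclZ => hTF.trans (he.2 Z heZ heclZ)⟩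

lemma IsUniformLine.freelyPlaced (hX : IsUniformLine M X) (hG : IsLiftRep G (del M {f}))
    (hf : f ∈ X) {b : α} (he : e ∈ X \ {f}) (hb : b ∈ X \ {f}) (heb : e ≠ b)
    (hinc : G.inc e = G.inc b) : FreelyPlaced M e X := by
  refine ⟨M.mem_closure_of_mem he.1 hX.1, fun Z heZ heclZ => ?_⟩
  by_cases hfclZ : f ∈ M.closure Z
  · exact hX.subset_closure he.1 hf he.2 heclZ hfclZ
  · have hfZ : f ∉ Z := fun hfZ => hfclZ (M.mem_closure_of_mem' hfZ (hX.1 hf))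
    have hbcl : b ∈ (del M {f}).closure Z :=
      hG.mem_closure_of_inc_eq ((hX.del_singleton f).1 hb) hinc
        ((mem_closure_del_singleton_iff he.2 hfZ).2 heclZ) heZ
    exact hX.subset_closure he.1 hb.1 heb heclZ ((mem_closure_del_singleton_iff hb.2 hfZ).1 hbcl)

/-! ### Extending a graph by a freely placed element -/

section Extension

variable {t : α}

lemma IsLiftRep.liftSpans_addParallel_iff (hG : IsLiftRep G (del M {e})) (hT : M.IsCircuit T)
    (heT : e ∉ T) (htT : t ∈ T) (hinc : ∀ x ∈ T, G.inc x = G.inc t) (heZ : e ∉ Z) :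
    (G.addParallel e t).LiftSpans Z e ↔ T ⊆ M.closure Z := by
  have hTE : T ⊆ G.E := hG.1 ▸ subset_sdiff_singleton hT.subset_ground heT
  have hparallel {x : α} (hx : x ∈ T) : G.addParallel e t = G.addParallel e x := by
    simp only [Graph.addParallel, hinc x hx]
  have hspans {x : α} (hx : x ∈ T) (hxZ : x ∉ Z) :
      (G.addParallel e t).LiftSpans Z e ↔ x ∈ M.closure Z := by
    have hxe : x ≠ e := ne_of_mem_of_not_mem hx heT
    rw [hparallel hx, Graph.liftSpans_addParallel_self_iff (hTE hx) hxe heZ hxZ,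
      ← hG.mem_closure_iff hxZ, mem_closure_del_singleton_iff hxe heZ]
  by_cases hTZ : T ⊆ Z
  · have hte : t ≠ e := ne_of_mem_of_not_mem htT heT
    have hcl : T ⊆ M.closure Z := fun x hx => M.mem_closure_of_mem' (hTZ hx) (hT.subset_ground hx)
    have hT' : G.LiftSpans (T \ {t}) t := (hG.mem_closure_iff (by simp)).1 <|
      (mem_closure_del_singleton_iff hte fun h => heT h.1).2
        (hT.mem_closure_sdiff_singleton_of_mem htT)
    obtain ⟨C, hCT, hC⟩ := (Graph.liftSpans_addParallel_self_iff (hTE htT) hte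
      (fun h => heT h.1) (by simp)).2 hT'
    exact iff_of_true ⟨C, hCT.trans (insert_subset_insert (sdiff_subset.trans hTZ)), hC⟩ hcl
  · obtain ⟨x, hxT, hxZ⟩ := not_subset.1 hTZ
    refine ⟨fun h y hyT => ?_, fun h => (hspans hxT hxZ).2 (h hxT)⟩
    by_cases hyZ : y ∈ Z
    · exact M.mem_closure_of_mem' hyZ (hT.subset_ground hyT)
    · exact (hspans hyT hyZ).1 h

lemma mem_upperClosure_iff_insert {P : Set α → Prop} :
    X ∈ upperClosure {C | P C ∧ e ∈ C} ↔
      e ∈ X ∧ ∃ C ⊆ insert e (X \ {e}), P C ∧ e ∈ C := by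
  constructor
  · rintro ⟨C, hC, hCX⟩
    exact ⟨hCX hC.2, C, hCX.trans (by simp), hC⟩
  · rintro ⟨heX, C, hCX, hC⟩
    exact ⟨C, hC, by simpa [heX] using hCX⟩

theorem IsLiftRep.addParallel (hG : IsLiftRep G (del M {e})) (he : e ∈ M.E) (hT : M.IsCircuit T)
    (heT : e ∉ T) (htT : t ∈ T) (hinc : ∀ x ∈ T, G.inc x = G.inc t)
    (hfree : FreelyPlaced M e T) : IsLiftRep (G.addParallel e t) M := by
  refine ⟨by simp [Graph.addParallel, ← hG.1, del, insert_eq_of_mem he], fun C => ?_⟩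
  by_cases heC : e ∈ C
  swap
  · rw [Graph.liftCircuit_addParallel_iff heC, ← hG.2, circuit_del_singleton_iff heC,
      Circuit, isCircuit_def]
  have hM : IsAntichain (· ≤ ·) {C | Circuit M C ∧ e ∈ C} :=
    (setOfPred_minimal_antichain M.Dep).subset fun _ h => h.1
  have hL : IsAntichain (· ≤ ·) {C | (G.addParallel e t).LiftCircuit C ∧ e ∈ C} :=
    (setOfPred_minimal_antichain _).subset fun _ h => h.1
  -- An antichain is determined by its upper closure.
  have hupper : upperClosure {C | Circuit M C ∧ e ∈ C} =
      upperClosure {C | (G.addParallel e t).LiftCircuit C ∧ e ∈ C} := by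
    ext X
    have heX : e ∉ X \ {e} := by simp
    have hspans := (mem_closure_iff_exists_isCircuit heX).symm.trans <|
      (hfree.mem_closure_iff heX).trans (hG.liftSpans_addParallel_iff hT heT htT hinc heX).symm
    simp only [SetLike.mem_coe, mem_upperClosure_iff_insert]
    exact and_congr_right fun _ => hspans
  have hiff := hM.minimal_mem_upperClosure_iff_mem (x := C)
  rw [hupper, hL.minimal_mem_upperClosure_iff_mem] at hiff
  simpa [heC] using hiff.symm

end Extension

/-! ### The bicircular lift representation -/

theorem IsUniformLine.isBicircularLift (hX : IsUniformLine M X) (hX5 : 5 ≤ X.encard)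
    (hdel : ∀ f ∈ X, InBL (del M {f})) : IsBicircularLift M := by
  have hcard {f : α} (hf : f ∈ X) : 4 ≤ (X \ {f}).encard := by
    rw [← encard_sdiff_singleton_add_one hf] at hX5
    have hfive : (4 : ℕ∞) + 1 = 5 := by norm_num
    exact (ENat.add_le_add_iff_right ENat.one_ne_top).1 (hfive.trans_le hX5)
  obtain ⟨f, hf⟩ : X.Nonempty := one_le_encard_iff_nonempty.1 (le_trans (by norm_num) hX5)
  obtain ⟨_, _, hGf, S, hSX, hS3, hS⟩ :=
    (hX.del_singleton f).exists_triple_inc_eq (hcard hf) (hdel f hf)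
  obtain ⟨e, b, _, heb, -, -, rfl⟩ := encard_eq_three.1 hS3
  have heX : e ∈ X := (hSX (by simp)).1
  have hfree : FreelyPlaced M e X := hX.freelyPlaced hGf hf (hSX (by simp)) (hSX (by simp)) heb
    (hS e (by simp) b (by simp))
  obtain ⟨V, G, hG, T, hTX, hT3, hT⟩ :=
    (hX.del_singleton e).exists_triple_inc_eq (hcard heX) (hdel e heX)
  obtain ⟨t, u, _, htu, -, -, rfl⟩ := encard_eq_three.1 hT3
  have hTX' := hTX.trans sdiff_subset
  have hTcl : X ⊆ M.closure _ := hX.subset_closure (hTX' (by simp)) (hTX' (by simp)) htu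
    (M.mem_closure_of_mem (by simp) (hTX'.trans hX.1))
    (M.mem_closure_of_mem (by simp) (hTX'.trans hX.1))
  exact ⟨V, G.addParallel e t, hG.addParallel (hX.1 heX) (hX.2 _ hTX' hT3)
    (fun h => (hTX h).2 rfl) (by simp) (fun x hx => hT x hx t (by simp))
    (hfree.mono hTX' (hTcl heX))⟩

theorem statement_19_general {α : Type u} {M : Matroid α} (hex : ExcludedMinorBL M) :
    ¬ ∃ X ⊆ M.E, X.encard = 5 ∧ IsUnif 2 5 (M ↾ X) := by
  rintro ⟨X, hXE, hX5, hU⟩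
  have hdel : ∀ f ∈ X, InBL (del M {f}) := fun f hf =>
    hex.2 _ (isStrictMinor_del_singleton (hXE hf))
  exact hex.1 (.inr ((hU.isUniformLine hXE).isBicircularLift hX5.ge hdel))

theorem statement_19 {α : Type u} (M : Matroid α) (h3 : ThreeConnected M)
    (hex : ExcludedMinorBL M) (hU : HasU24Minor M) :
    ¬ ∃ X ⊆ M.E, X.encard = 5 ∧ IsUnif 2 5 (M ↾ X) :=
  statement_19_general hex

end BLFormal
end
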